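/- arXiv:1310.3213 — 2 statements merged into one kernel-verified Lean document; each statement's English description precedes it below -/
import Mathlib

section
/- Let λ, ν ∈ ℂ with ν - λ = 2l for a natural number l, and define the differential operator C̃_{λ,ν} = rest ∘ Σ_{j=0}^{l} (2^{2l-2j}/(j!(2l-2j)!)) ∏_{i=1}^{l-j}((λ+ν-n-1)/2 + i) · Δ_{ℝ^{n-1}}^j (∂/∂x_n)^{2l-2j}, where rest is restriction to x_n = 0. Then C̃_{λ,ν} applied to the function (1+|x|²+x_n²)^{-λ} and evaluated at x = 0 gives (-1)^l 2^{2l} (λ)_{2l}/l!. -/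
/-- The Euclidean Laplacian `Δ = Σ ∂²/∂x_i²` of a complex-valued function on `ℝ^m`. -/
noncomputable def laplacianC (m : ℕ) (f : EuclideanSpace ℝ (Fin m) → ℂ)
    (x : EuclideanSpace ℝ (Fin m)) : ℂ :=
  ∑ i : Fin m,
    fderiv ℝ (fun y => fderiv ℝ f y (EuclideanSpace.single i (1 : ℝ))) x
      (EuclideanSpace.single i (1 : ℝ))

open Finset in
/-- Chu–Vandermonde identity for rising factorials. -/
theorem sum_choose_mul_prod_add {R : Type*} [CommRing R] (p q : R) (l : ℕ) :
    ∑ j ∈ range (l + 1), (l.choose j : R) *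
        ((∏ i ∈ range j, (p + i)) * ∏ i ∈ range (l - j), (q + i)) =
      ∏ i ∈ range l, (p + q + i) := by
  have key : ∀ l : ℕ, ∑ ij ∈ antidiagonal l, (l.choose ij.1 : R) *
      ((∏ i ∈ range ij.1, (p + i)) * ∏ i ∈ range ij.2, (q + i)) =
      ∏ i ∈ range l, (p + q + i) := by
    intro l
    induction l with
    | zero => simp
    | succ l ih =>
      rw [sum_antidiagonal_choose_succ_mul
        (fun a b => (∏ i ∈ range a, (p + i)) * ∏ i ∈ range b, (q + i)),
        prod_range_succ, ← ih, sum_mul, ← sum_add_distrib]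
      refine sum_congr rfl fun ij hij => ?_
      have hl : ij.1 + ij.2 = l := mem_antidiagonal.mp hij
      rw [← Nat.choose_symm_of_eq_add hl.symm, prod_range_succ, prod_range_succ, ← hl]
      push_cast
      ring
  rw [← key, Nat.sum_antidiagonal_eq_sum_range_succ
    (fun a b => (l.choose a : R) * ((∏ i ∈ range a, (p + i)) * ∏ i ∈ range b, (q + i)))]

theorem prod_range_succ_sub_natCast {R : Type*} [CommRing R] (p : R) (k : ℕ) :
    ∏ i ∈ Finset.range (k + 1), (p - i) = p * ∏ i ∈ Finset.range k, (p - 1 - i) := by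
  rw [Finset.prod_range_succ', mul_comm]
  congr 1
  · simp
  · refine Finset.prod_congr rfl fun i _ => ?_
    push_cast
    ring

theorem sub_one_mul_prod_sub_two {R : Type*} [CommRing R] (p : R) (k : ℕ) :
    (p - 1) * ∏ i ∈ Finset.range k, (p - 2 - i) =
      (∏ i ∈ Finset.range k, (p - 1 - i)) * (p - 1 - k) := by
  rw [← Finset.prod_range_succ, prod_range_succ_sub_natCast]
  congr 1
  refine Finset.prod_congr rfl fun i _ => ?_
  ring

theorem hasDerivAt_ofReal_cpow_of_pos {s : ℝ} (hs : 0 < s) (p : ℂ) :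
    HasDerivAt (fun s : ℝ => (s : ℂ) ^ p) (p * (s : ℂ) ^ (p - 1)) s := by
  have h := (hasDerivAt_id (s : ℂ)).cpow_const (c := p) (Or.inl (by simpa using hs))
  simpa using h.comp_ofReal

theorem contDiff_ofReal_cpow_const {E : Type*} [NormedAddCommGroup E] [NormedSpace ℝ E]
    {n : WithTop ℕ∞} {h : E → ℝ} (hh : ContDiff ℝ n h) (hpos : ∀ x, 0 < h x) (p : ℂ) :
    ContDiff ℝ n (fun x => (h x : ℂ) ^ p) := by
  have heq : (fun x => (h x : ℂ) ^ p) = fun x => Complex.exp ((Real.log (h x) : ℂ) * p) := by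
    funext x
    rw [Complex.cpow_def_of_ne_zero (by exact_mod_cast (hpos x).ne'), Complex.ofReal_log (hpos x).le]
  rw [heq]
  exact (((Complex.ofRealCLM.contDiff.comp (hh.log fun x => (hpos x).ne'))).mul
    contDiff_const).cexp

theorem ofReal_mul_cpow_sub_one {s : ℝ} (hs : 0 < s) (p : ℂ) :
    (s : ℂ) * (s : ℂ) ^ (p - 1) = (s : ℂ) ^ p := by
  have hs' : (s : ℂ) ≠ 0 := by exact_mod_cast hs.ne'
  rw [Complex.cpow_sub _ _ hs', Complex.cpow_one, mul_div_cancel₀ _ hs']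

theorem hasDerivAt_add_sq_cpow {a : ℝ} (ha : 0 < a) (p : ℂ) (t : ℝ) :
    HasDerivAt (fun t : ℝ => ((a + t ^ 2 : ℝ) : ℂ) ^ p)
      (2 * p * (t * ((a + t ^ 2 : ℝ) : ℂ) ^ (p - 1))) t := by
  have h1 : HasDerivAt (fun t : ℝ => a + t ^ 2) (2 * t) t := by
    simpa using (hasDerivAt_pow 2 t).const_add a
  convert! (hasDerivAt_ofReal_cpow_of_pos (by positivity : 0 < a + t ^ 2) p).scomp t h1 using 1
  simp only [Complex.real_smul]
  push_cast
  ring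

theorem deriv_deriv_add_sq_cpow {a : ℝ} (ha : 0 < a) (p : ℂ) :
    deriv (deriv fun t : ℝ => ((a + t ^ 2 : ℝ) : ℂ) ^ p) =
      (fun t : ℝ => (2 * p + 4 * p * (p - 1)) * ((a + t ^ 2 : ℝ) : ℂ) ^ (p - 1)) -
        fun t : ℝ => 4 * p * (p - 1) * a * ((a + t ^ 2 : ℝ) : ℂ) ^ (p - 2) := by
  rw [funext fun t => (hasDerivAt_add_sq_cpow ha p t).deriv]
  funext t
  have h := ((hasDerivAt_id t).ofReal_comp.mul (hasDerivAt_add_sq_cpow ha (p - 1) t)).const_mul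
    (2 * p)
  refine h.deriv.trans ?_
  have h2 := ofReal_mul_cpow_sub_one (by positivity : 0 < a + t ^ 2) (p - 1)
  rw [sub_sub, one_add_one_eq_two] at h2
  simp only [Pi.sub_apply, sub_sub, one_add_one_eq_two, ← h2, id_eq]
  push_cast
  ring

theorem iteratedDeriv_two_mul_add_sq_cpow {a : ℝ} (ha : 0 < a) (k : ℕ) (p : ℂ) :
    iteratedDeriv (2 * k) (fun t : ℝ => ((a + t ^ 2 : ℝ) : ℂ) ^ p) 0 =
      4 ^ k * (∏ i ∈ Finset.range k, ((1 / 2 : ℂ) + i)) * (∏ i ∈ Finset.range k, (p - i)) *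
        (a : ℂ) ^ (p - k) := by
  induction k generalizing p with
  | zero => simp
  | succ k ih =>
    have hsm : ∀ q : ℂ, ContDiff ℝ (2 * k : ℕ) (fun t : ℝ => ((a + t ^ 2 : ℝ) : ℂ) ^ q) :=
      fun q => contDiff_ofReal_cpow_const (by fun_prop) (fun t => by positivity) q
    rw [show 2 * (k + 1) = 2 * k + 1 + 1 by ring, iteratedDeriv_succ', iteratedDeriv_succ',
      deriv_deriv_add_sq_cpow ha, iteratedDeriv_sub (contDiff_const.mul (hsm _)).contDiffAt
        (contDiff_const.mul (hsm _)).contDiffAt,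
      iteratedDeriv_const_mul_field, iteratedDeriv_const_mul_field, ih, ih,
      prod_range_succ_sub_natCast, Finset.prod_range_succ]
    have h1 : (a : ℂ) * (a : ℂ) ^ (p - 2 - k) = (a : ℂ) ^ (p - (k + 1 : ℕ)) := by
      rw [← ofReal_mul_cpow_sub_one ha (p - (k + 1 : ℕ))]
      congr 2
      push_cast
      ring
    have h2 : p - 1 - k = p - (k + 1 : ℕ) := by
      push_cast
      ring
    have h3 := sub_one_mul_prod_sub_two p k
    rw [← h2] at h1 ⊢
    linear_combination
      (-(4 * p * (p - 1) * (4 ^ k * (∏ i ∈ Finset.range k, ((1 / 2 : ℂ) + i)) *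
        ∏ i ∈ Finset.range k, (p - 2 - i)))) * h1 -
      4 * p * (4 ^ k * ∏ i ∈ Finset.range k, ((1 / 2 : ℂ) + i)) * (a : ℂ) ^ (p - 1 - k) * h3

theorem factorial_two_mul_eq_prod (k : ℕ) :
    ((2 * k).factorial : ℂ) =
      4 ^ k * (∏ i ∈ Finset.range k, ((1 / 2 : ℂ) + i)) * (k.factorial : ℂ) := by
  induction k with
  | zero => simp
  | succ k ih =>
    rw [show 2 * (k + 1) = 2 * k + 1 + 1 by ring, Nat.factorial_succ, Nat.factorial_succ,
      Nat.factorial_succ, Finset.prod_range_succ]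
    push_cast
    rw [ih]
    ring

open scoped ContDiff in
theorem contDiff_laplacianC {m : ℕ} {f : EuclideanSpace ℝ (Fin m) → ℂ} (hf : ContDiff ℝ ∞ f) :
    ContDiff ℝ ∞ (laplacianC m f) := by
  unfold laplacianC
  refine ContDiff.sum fun i _ => ?_
  have h1 : ContDiff ℝ ∞ fun y => fderiv ℝ f y (EuclideanSpace.single i (1 : ℝ)) :=
    (hf.fderiv_right (by simp)).clm_apply contDiff_const
  exact (h1.fderiv_right (by simp)).clm_apply contDiff_const

open scoped ContDiff in
theorem laplacianC_linear_combination {m : ℕ} {f g : EuclideanSpace ℝ (Fin m) → ℂ}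
    (hf : ContDiff ℝ ∞ f) (hg : ContDiff ℝ ∞ g) (a b : ℂ) :
    laplacianC m (fun x => a * f x + b * g x) =
      fun x => a * laplacianC m f x + b * laplacianC m g x := by
  have key : ∀ {f g : EuclideanSpace ℝ (Fin m) → ℂ}, ContDiff ℝ ∞ f → ContDiff ℝ ∞ g →
      ∀ x v, fderiv ℝ (fun x => a * f x + b * g x) x v =
        a * fderiv ℝ f x v + b * fderiv ℝ g x v := by
    intro f g hf hg x v
    have h := (((hf.differentiable (by simp)) x).hasFDerivAt.const_mul a).add
      (((hg.differentiable (by simp)) x).hasFDerivAt.const_mul b)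
    have h' : HasFDerivAt (fun x => a * f x + b * g x) _ x := h
    rw [h'.fderiv]
    simp
  funext x
  unfold laplacianC
  rw [Finset.mul_sum, Finset.mul_sum, ← Finset.sum_add_distrib]
  refine Finset.sum_congr rfl fun i _ => ?_
  simp only [key hf hg]
  exact key ((hf.fderiv_right (by simp)).clm_apply contDiff_const)
    ((hg.fderiv_right (by simp)).clm_apply contDiff_const) x _

open scoped ContDiff in
theorem iterate_laplacianC_linear_combination {m : ℕ} (j : ℕ)
    {f g : EuclideanSpace ℝ (Fin m) → ℂ} (hf : ContDiff ℝ ∞ f) (hg : ContDiff ℝ ∞ g) (a b : ℂ)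
    (x : EuclideanSpace ℝ (Fin m)) :
    (laplacianC m)^[j] (fun x => a * f x + b * g x) x =
      a * (laplacianC m)^[j] f x + b * (laplacianC m)^[j] g x := by
  induction j generalizing f g with
  | zero => rfl
  | succ j ih =>
    simp only [Function.iterate_succ_apply]
    rw [laplacianC_linear_combination hf hg,
      ih (contDiff_laplacianC hf) (contDiff_laplacianC hg)]

theorem fderiv_one_add_norm_sq_cpow {m : ℕ} (p : ℂ) (x v : EuclideanSpace ℝ (Fin m)) :
    fderiv ℝ (fun x : EuclideanSpace ℝ (Fin m) => ((1 + ‖x‖ ^ 2 : ℝ) : ℂ) ^ p) x v =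
      2 * p * (inner ℝ x v : ℝ) * ((1 + ‖x‖ ^ 2 : ℝ) : ℂ) ^ (p - 1) := by
  have h := (hasDerivAt_ofReal_cpow_of_pos (by positivity : 0 < 1 + ‖x‖ ^ 2) p).hasFDerivAt.comp x
    ((hasStrictFDerivAt_norm_sq x).hasFDerivAt.const_add 1)
  refine (congrArg (· v) h.fderiv).trans ?_
  simp
  ring

theorem contDiff_one_add_norm_sq_cpow {m : ℕ} (n : WithTop ℕ∞) (p : ℂ) :
    ContDiff ℝ n fun x : EuclideanSpace ℝ (Fin m) => ((1 + ‖x‖ ^ 2 : ℝ) : ℂ) ^ p :=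
  contDiff_ofReal_cpow_const (contDiff_const.add (contDiff_norm_sq ℝ))
    (fun x => by positivity) p

theorem laplacianC_one_add_norm_sq_cpow {m : ℕ} (p : ℂ) :
    laplacianC m (fun x => ((1 + ‖x‖ ^ 2 : ℝ) : ℂ) ^ p) = fun x =>
      (2 * p * m + 4 * p * (p - 1)) * ((1 + ‖x‖ ^ 2 : ℝ) : ℂ) ^ (p - 1) +
        (-(4 * p * (p - 1))) * ((1 + ‖x‖ ^ 2 : ℝ) : ℂ) ^ (p - 2) := by
  funext x
  have hterm : ∀ i : Fin m,
      fderiv ℝ (fun y => fderiv ℝ (fun x : EuclideanSpace ℝ (Fin m) =>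
          ((1 + ‖x‖ ^ 2 : ℝ) : ℂ) ^ p) y (EuclideanSpace.single i (1 : ℝ))) x
        (EuclideanSpace.single i (1 : ℝ)) =
      2 * p * ((1 + ‖x‖ ^ 2 : ℝ) : ℂ) ^ (p - 1) +
        4 * p * (p - 1) * ((1 + ‖x‖ ^ 2 : ℝ) : ℂ) ^ (p - 2) * ((x i ^ 2 : ℝ) : ℂ) := by
    intro i
    simp only [fderiv_one_add_norm_sq_cpow, EuclideanSpace.inner_single_right]
    have hd : HasFDerivAt (fun y : EuclideanSpace ℝ (Fin m) => 2 * p * ((y i : ℝ) : ℂ))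
        ((2 * p) • (Complex.ofRealCLM.comp (EuclideanSpace.proj i : _ →L[ℝ] ℝ))) x :=
      (Complex.ofRealCLM.comp (EuclideanSpace.proj i : _ →L[ℝ] ℝ)).hasFDerivAt.const_mul (2 * p)
    have hq := ((contDiff_one_add_norm_sq_cpow (m := m) 1 (p - 1)).differentiable
      (by simp) x).hasFDerivAt
    have h := hd.mul hq
    have hfun : (fun y : EuclideanSpace ℝ (Fin m) =>
        2 * p * (((1 : ℝ) * (starRingEnd ℝ) (y.ofLp i) : ℝ) : ℂ) *
          ((1 + ‖y‖ ^ 2 : ℝ) : ℂ) ^ (p - 1)) =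
        fun y => 2 * p * ((y i : ℝ) : ℂ) * ((1 + ‖y‖ ^ 2 : ℝ) : ℂ) ^ (p - 1) := by
      simp
    rw [hfun]
    refine (congrArg (· (EuclideanSpace.single i (1 : ℝ))) h.fderiv).trans ?_
    simp only [add_apply, smul_apply,
      fderiv_one_add_norm_sq_cpow, EuclideanSpace.inner_single_right]
    simp [sub_sub, one_add_one_eq_two]
    ring
  have hpos : (0 : ℝ) < 1 + ‖x‖ ^ 2 := by positivity
  have h2 := ofReal_mul_cpow_sub_one hpos (p - 1)
  rw [sub_sub, one_add_one_eq_two] at h2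
  unfold laplacianC
  rw [Finset.sum_congr rfl fun i _ => hterm i, Finset.sum_add_distrib, ← Finset.mul_sum,
    ← Finset.mul_sum, ← Complex.ofReal_sum, ← EuclideanSpace.real_norm_sq_eq]
  simp only [Finset.sum_const, Finset.card_univ, Fintype.card_fin, nsmul_eq_mul, ← h2]
  push_cast
  ring

theorem iterate_laplacianC_one_add_norm_sq_cpow_zero (m j : ℕ) (p : ℂ) :
    (laplacianC m)^[j] (fun x => ((1 + ‖x‖ ^ 2 : ℝ) : ℂ) ^ p) 0 =
      4 ^ j * (∏ i ∈ Finset.range j, ((m / 2 : ℂ) + i)) * ∏ i ∈ Finset.range j, (p - i) := by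
  induction j generalizing p with
  | zero => simp
  | succ j ih =>
    rw [Function.iterate_succ_apply, laplacianC_one_add_norm_sq_cpow,
      iterate_laplacianC_linear_combination j (contDiff_one_add_norm_sq_cpow _ _)
        (contDiff_one_add_norm_sq_cpow _ _), ih, ih, prod_range_succ_sub_natCast,
      Finset.prod_range_succ]
    linear_combination
      (-(4 * p * (4 ^ j * ∏ i ∈ Finset.range j, ((m / 2 : ℂ) + i)))) *
        sub_one_mul_prod_sub_two p j

theorem iterate_laplacianC_iteratedDeriv_cpow_zero (m j k : ℕ) (p : ℂ) :
    (laplacianC m)^[j] (fun x => iteratedDeriv (2 * k)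
        (fun t : ℝ => ((1 + ‖x‖ ^ 2 + t ^ 2 : ℝ) : ℂ) ^ p) 0) 0 * (k.factorial : ℂ) =
      ((2 * k).factorial : ℂ) * 4 ^ j * (∏ i ∈ Finset.range j, ((m / 2 : ℂ) + i)) *
        ∏ i ∈ Finset.range (k + j), (p - i) := by
  have h1 : ∀ x : EuclideanSpace ℝ (Fin m), iteratedDeriv (2 * k)
      (fun t : ℝ => ((1 + ‖x‖ ^ 2 + t ^ 2 : ℝ) : ℂ) ^ p) 0 =
      (4 ^ k * (∏ i ∈ Finset.range k, ((1 / 2 : ℂ) + i)) * ∏ i ∈ Finset.range k, (p - i)) *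
        ((1 + ‖x‖ ^ 2 : ℝ) : ℂ) ^ (p - k) + 0 * ((1 + ‖x‖ ^ 2 : ℝ) : ℂ) ^ (p - k) := by
    intro x
    rw [iteratedDeriv_two_mul_add_sq_cpow (by positivity), zero_mul, add_zero]
  simp only [h1]
  rw [iterate_laplacianC_linear_combination j (contDiff_one_add_norm_sq_cpow _ _)
        (contDiff_one_add_norm_sq_cpow _ _), iterate_laplacianC_one_add_norm_sq_cpow_zero,
    factorial_two_mul_eq_prod, Finset.prod_range_add]
  simp only [Nat.cast_add, ← sub_sub]
  ring

theorem stmt_8 (n : ℕ) (hn : 2 ≤ n) (l : ℕ) (lam ν : ℂ) (hν : ν - lam = 2 * l) :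
    ∑ j ∈ Finset.range (l + 1),
        ((2 : ℂ) ^ (2 * l - 2 * j) /
            ((j.factorial : ℂ) * ((2 * l - 2 * j).factorial : ℂ))) *
          (∏ i ∈ Finset.range (l - j), ((lam + ν - n - 1) / 2 + (i + 1))) *
          ((laplacianC (n - 1))^[j]
            (fun x : EuclideanSpace ℝ (Fin (n - 1)) =>
              iteratedDeriv (2 * l - 2 * j)
                (fun t : ℝ => ((1 + ‖x‖ ^ 2 + t ^ 2 : ℝ) : ℂ) ^ (-lam)) 0) 0) =
      (-1) ^ l * (2 : ℂ) ^ (2 * l) *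
        (∏ i ∈ Finset.range (2 * l), (lam + i)) / (l.factorial : ℂ) := by
  have hν' : ν = lam + 2 * l := by linear_combination hν
  have hterm : ∀ j ∈ Finset.range (l + 1),
      ((2 : ℂ) ^ (2 * l - 2 * j) /
            ((j.factorial : ℂ) * ((2 * l - 2 * j).factorial : ℂ))) *
          (∏ i ∈ Finset.range (l - j), ((lam + ν - n - 1) / 2 + (i + 1))) *
          ((laplacianC (n - 1))^[j]
            (fun x : EuclideanSpace ℝ (Fin (n - 1)) =>
              iteratedDeriv (2 * l - 2 * j)
                (fun t : ℝ => ((1 + ‖x‖ ^ 2 + t ^ 2 : ℝ) : ℂ) ^ (-lam)) 0) 0) =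
      4 ^ l * (∏ i ∈ Finset.range l, (-lam - i)) / (l.factorial : ℂ) *
        ((l.choose j : ℂ) * ((∏ i ∈ Finset.range j, (((n - 1 : ℕ) / 2 : ℂ) + i)) *
          ∏ i ∈ Finset.range (l - j), (lam + l - ((n - 1 : ℕ) / 2 : ℂ) + i))) := by
    intro j hj
    have hjl : j ≤ l := Nat.lt_succ_iff.mp (Finset.mem_range.mp hj)
    obtain ⟨k, rfl⟩ := Nat.exists_eq_add_of_le' hjl
    have hprod : ∏ i ∈ Finset.range k, ((lam + ν - n - 1) / 2 + ((i : ℂ) + 1)) =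
        ∏ i ∈ Finset.range k, (lam + (k + j : ℕ) - ((n - 1 : ℕ) / 2 : ℂ) + i) := by
      refine Finset.prod_congr rfl fun i _ => ?_
      rw [hν', Nat.cast_sub (by lia : 1 ≤ n)]
      push_cast
      ring
    rw [show 2 * (k + j) - 2 * j = 2 * k by lia, Nat.add_sub_cancel, hprod]
    have hD := iterate_laplacianC_iteratedDeriv_cpow_zero (n - 1) j k (-lam)
    have hk : (k.factorial : ℂ) ≠ 0 := by exact_mod_cast k.factorial_ne_zero
    have hjf : (j.factorial : ℂ) ≠ 0 := by exact_mod_cast j.factorial_ne_zero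
    have hkj : ((k + j).factorial : ℂ) ≠ 0 := by exact_mod_cast (k + j).factorial_ne_zero
    have h2k : ((2 * k).factorial : ℂ) ≠ 0 := by exact_mod_cast (2 * k).factorial_ne_zero
    rw [eq_div_of_mul_eq hk hD, Nat.add_comm k j, Nat.cast_add_choose, Nat.add_comm j k]
    rw [pow_mul, show (2 : ℂ) ^ 2 = 4 by norm_num, pow_add]
    field_simp
  rw [Finset.sum_congr rfl hterm, ← Finset.mul_sum, sum_choose_mul_prod_add,
    two_mul l, Finset.prod_range_add, ← two_mul, pow_mul, show (2 : ℂ) ^ 2 = 4 by norm_num]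
  have hneg : ∏ i ∈ Finset.range l, (-lam - (i : ℂ)) =
      (-1) ^ l * ∏ i ∈ Finset.range l, (lam + i) := by
    rw [← Finset.card_range l, ← Finset.prod_const, Finset.card_range,
      ← Finset.prod_mul_distrib]
    exact Finset.prod_congr rfl fun i _ => by ring
  have hshift : ∏ i ∈ Finset.range l,
      (((n - 1 : ℕ) / 2 : ℂ) + (lam + l - ((n - 1 : ℕ) / 2 : ℂ)) + i) =
      ∏ i ∈ Finset.range l, (lam + (l + i : ℕ)) := by
    refine Finset.prod_congr rfl fun i _ => ?_
    push_cast
    ring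
  rw [hneg, hshift]
  ring
end

section
/- For ν ∈ ℂ and m ≥ 1, the Fourier transform on ℝ^m of (|x|²+t²)^λ (for fixed real t ≠ 0 and Re λ < -m/2) is ∫_{ℝ^m}(|x|²+t²)^λ e^{-i⟨x,ξ⟩}dx = (2|t|^{m+2λ} π^{m/2}/Γ(-λ)) K̃_{m/2+λ}(|tξ|), where K̃_ν(z) = (z/2)^{-ν} K_ν(z) is the renormalized K-Bessel function; moreover K̃_ν(z) = (z/2)^{-2ν} K̃_{-ν}(z). -/
open MeasureTheory
open scoped InnerProductSpace

/-- The modified Bessel function of the first kind `I_ν(z)` for `z > 0`, via its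
power series. -/
noncomputable def besselI (ν : ℂ) (z : ℝ) : ℂ :=
  ((z : ℂ) / 2) ^ ν *
    ∑' j : ℕ, ((z : ℂ) / 2) ^ (2 * j) / ((j.factorial : ℂ) * Complex.Gamma ((j : ℂ) + ν + 1))

/-- The modified Bessel function of the second kind,
`K_ν(z) = (π/(2 sin νπ))(I_{-ν}(z) - I_ν(z))`. -/
noncomputable def besselK (ν : ℂ) (z : ℝ) : ℂ :=
  (Real.pi : ℂ) / (2 * Complex.sin (ν * Real.pi)) * (besselI (-ν) z - besselI ν z)

/-- The renormalized K-Bessel function `K̃_ν(z) = (z/2)^{-ν} K_ν(z)`. -/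
noncomputable def besselKt (ν : ℂ) (z : ℝ) : ℂ := ((z : ℂ) / 2) ^ (-ν) * besselK ν z

section

open Filter Set
open scoped Topology

/-- The entire part `∑ b ^ j / (j! Γ(j + ν + 1))` of the modified Bessel function `I_ν`,
in the variable `b = (z / 2) ^ 2`. -/
noncomputable def besselSeries (ν : ℂ) (b : ℝ) : ℂ :=
  ∑' j : ℕ, (b : ℂ) ^ j / ((j.factorial : ℂ) * Complex.Gamma ((j : ℂ) + ν + 1))

lemma exists_norm_inv_Gamma_le (ν : ℂ) :
    ∃ C : ℝ, 0 ≤ C ∧ ∀ j : ℕ, ‖(Complex.Gamma ((j : ℂ) + ν + 1))⁻¹‖ ≤ C := by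
  set a : ℕ → ℝ := fun j => ‖(Complex.Gamma ((j : ℂ) + ν + 1))⁻¹‖ with ha
  obtain ⟨N, hN⟩ := exists_nat_ge ‖ν‖
  have hstep : ∀ j, N ≤ j → a (j + 1) ≤ a j := by
    intro j hj
    have h1 : (1 : ℝ) ≤ ‖(j : ℂ) + ν + 1‖ := by
      have h2 : ‖(j : ℂ) + 1‖ ≤ ‖(j : ℂ) + ν + 1‖ + ‖ν‖ := by
        calc ‖(j : ℂ) + 1‖ = ‖((j : ℂ) + ν + 1) - ν‖ := by ring_nf
          _ ≤ _ := norm_sub_le _ _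
      have h3 : ‖(j : ℂ) + 1‖ = (j : ℝ) + 1 := by
        exact_mod_cast Complex.norm_natCast (j + 1)
      have h4 : (N : ℝ) ≤ j := by exact_mod_cast hj
      linarith
    simp only [ha]
    rw [Complex.one_div_Gamma_eq_self_mul_one_div_Gamma_add_one ((j : ℂ) + ν + 1), norm_mul]
    have h5 : ((j + 1 : ℕ) : ℂ) + ν + 1 = (j : ℂ) + ν + 1 + 1 := by push_cast; ring
    rw [h5]
    exact le_mul_of_one_le_left (norm_nonneg _) h1
  have htail : ∀ k, a (N + k) ≤ a N := by
    intro k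
    induction k with
    | zero => exact le_rfl
    | succ k ih => exact (hstep (N + k) (by omega)).trans ih
  refine ⟨∑ j ∈ Finset.range (N + 1), a j, Finset.sum_nonneg fun j _ => norm_nonneg _, ?_⟩
  intro j
  have hle : ∀ i, i < N + 1 → a i ≤ ∑ j ∈ Finset.range (N + 1), a j := fun i hi =>
    Finset.single_le_sum (f := a) (fun j _ => norm_nonneg _) (Finset.mem_range.2 hi)
  by_cases hj : j < N + 1
  · exact hle j hj
  · obtain ⟨k, rfl⟩ := Nat.exists_eq_add_of_le (show N ≤ j by omega)
    exact (htail k).trans (hle N (by omega))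

lemma summable_besselSeries (ν : ℂ) (b : ℝ) :
    Summable fun j : ℕ =>
      (b : ℂ) ^ j / ((j.factorial : ℂ) * Complex.Gamma ((j : ℂ) + ν + 1)) := by
  obtain ⟨C, -, hC⟩ := exists_norm_inv_Gamma_le ν
  refine Summable.of_norm_bounded ((Real.summable_pow_div_factorial |b|).mul_right C) fun j => ?_
  rw [div_eq_mul_inv, mul_inv, ← mul_assoc, norm_mul, norm_mul, norm_inv, norm_pow,
    Complex.norm_natCast, Complex.norm_real, Real.norm_eq_abs, ← div_eq_mul_inv]
  gcongr
  exact hC j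

lemma natCast_mul_besselSeries_term_succ (ν w : ℂ) (j : ℕ) :
    ((j + 1 : ℕ) : ℂ) * w ^ j /
        (((j + 1).factorial : ℂ) * Complex.Gamma (((j + 1 : ℕ) : ℂ) + ν + 1)) =
      w ^ j / ((j.factorial : ℂ) * Complex.Gamma ((j : ℂ) + (ν + 1) + 1)) := by
  have h : ((j + 1 : ℕ) : ℂ) ≠ 0 := by exact_mod_cast j.succ_ne_zero
  rw [Nat.factorial_succ, Nat.cast_mul, mul_assoc, mul_div_mul_left _ _ h]
  push_cast
  ring_nf

lemma hasDerivAt_besselSeries (ν : ℂ) (b : ℝ) :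
    HasDerivAt (besselSeries ν) (besselSeries (ν + 1) b) b := by
  obtain ⟨C, hC0, hC⟩ := exists_norm_inv_Gamma_le ν
  obtain ⟨R, hR⟩ : ∃ R : ℝ, R = |b| + 1 := ⟨_, rfl⟩
  have hbR : b ∈ Ioo (-R) R := abs_lt.1 (by rw [hR]; linarith)
  have hR0 : 0 ≤ R := by rw [hR]; positivity
  set g' : ℕ → ℝ → ℂ := fun j y =>
    (j : ℂ) * (y : ℂ) ^ (j - 1) / ((j.factorial : ℂ) * Complex.Gamma ((j : ℂ) + ν + 1)) with hg'
  have hu : Summable fun j : ℕ => (j : ℝ) * R ^ (j - 1) / (j.factorial : ℝ) * C := by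
    refine Summable.mul_right C ((summable_nat_add_iff 1).1 ?_)
    refine (Real.summable_pow_div_factorial R).congr fun j => ?_
    have h : ((j + 1 : ℕ) : ℝ) ≠ 0 := by exact_mod_cast j.succ_ne_zero
    rw [Nat.factorial_succ, Nat.cast_mul, mul_div_mul_left _ _ h, Nat.add_sub_cancel]
  have key : HasDerivAt (besselSeries ν) (∑' j, g' j b) b := by
    unfold besselSeries
    refine hasDerivAt_tsum_of_isPreconnected hu isOpen_Ioo isPreconnected_Ioo (fun j y _ => ?_)
      (fun j y hy => ?_) hbR (summable_besselSeries ν b) hbR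
    · have h1 : HasDerivAt (fun y : ℝ => (y : ℂ) ^ j) ((j : ℂ) * (y : ℂ) ^ (j - 1)) y := by
        simpa using (hasDerivAt_pow j (y : ℂ)).comp_ofReal
      exact h1.div_const _
    · simp only [hg']
      rw [div_eq_mul_inv, mul_inv, ← mul_assoc, norm_mul, norm_mul, norm_mul, norm_inv, norm_pow,
        Complex.norm_natCast, Complex.norm_natCast, Complex.norm_real, Real.norm_eq_abs,
        ← div_eq_mul_inv]
      have : |y| ≤ R := (abs_lt.2 hy).le
      gcongr
      exact hC j
  refine key.congr_deriv ?_
  have hs : Summable fun j => g' (j + 1) b := by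
    refine (summable_besselSeries (ν + 1) b).congr fun j => ?_
    simp only [hg', Nat.add_sub_cancel]
    exact (natCast_mul_besselSeries_term_succ ν b j).symm
  have hs' : Summable fun j => g' j b := (summable_nat_add_iff (f := fun j => g' j b) 1).1 hs
  rw [hs'.tsum_eq_zero_add]
  simp only [hg', Nat.cast_zero, zero_mul, zero_div, zero_add, Nat.add_sub_cancel]
  exact tsum_congr fun j => natCast_mul_besselSeries_term_succ ν b j

lemma besselSeries_sub_one (ν : ℂ) (b : ℝ) :
    besselSeries (ν - 1) b = ν * besselSeries ν b + b * besselSeries (ν + 1) b := by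
  have hterm : ∀ j : ℕ,
      (b : ℂ) ^ j / ((j.factorial : ℂ) * Complex.Gamma ((j : ℂ) + (ν - 1) + 1)) =
        ν * ((b : ℂ) ^ j / ((j.factorial : ℂ) * Complex.Gamma ((j : ℂ) + ν + 1))) +
          (j : ℂ) * (b : ℂ) ^ j / ((j.factorial : ℂ) * Complex.Gamma ((j : ℂ) + ν + 1)) := by
    intro j
    have h := Complex.one_div_Gamma_eq_self_mul_one_div_Gamma_add_one ((j : ℂ) + ν)
    rw [show (j : ℂ) + (ν - 1) + 1 = j + ν by ring, div_eq_mul_inv, mul_inv, h]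
    simp only [div_eq_mul_inv, mul_inv]
    ring
  have hshift : ∀ j : ℕ, ((j + 1 : ℕ) : ℂ) * (b : ℂ) ^ (j + 1) /
        (((j + 1).factorial : ℂ) * Complex.Gamma (((j + 1 : ℕ) : ℂ) + ν + 1)) =
      b * ((b : ℂ) ^ j / ((j.factorial : ℂ) * Complex.Gamma ((j : ℂ) + (ν + 1) + 1))) := by
    intro j
    rw [← natCast_mul_besselSeries_term_succ]
    ring
  have hs : Summable fun j : ℕ =>
      (j : ℂ) * (b : ℂ) ^ j / ((j.factorial : ℂ) * Complex.Gamma ((j : ℂ) + ν + 1)) :=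
    (summable_nat_add_iff 1).1
      (((summable_besselSeries (ν + 1) b).mul_left (b : ℂ)).congr fun j => (hshift j).symm)
  unfold besselSeries
  rw [tsum_congr hterm, ((summable_besselSeries ν b).mul_left ν).tsum_add hs, tsum_mul_left,
    hs.tsum_eq_zero_add, tsum_congr hshift, tsum_mul_left]
  simp

lemma besselSeries_zero (ν : ℂ) : besselSeries ν 0 = (Complex.Gamma (ν + 1))⁻¹ := by
  unfold besselSeries
  rw [tsum_eq_single 0 fun j hj => by simp [hj]]
  simp

lemma besselSeries_cross (μ : ℂ) (b : ℝ) :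
    besselSeries (-μ) b * besselSeries (μ - 1) b - b * (besselSeries (1 - μ) b * besselSeries μ b) =
      Complex.sin (Real.pi * μ) / Real.pi := by
  set f : ℝ → ℂ := fun b =>
    besselSeries (-μ) b * besselSeries (μ - 1) b - b * (besselSeries (1 - μ) b * besselSeries μ b)
  have hd : ∀ x : ℝ, HasDerivAt f 0 x := by
    intro x
    have h1 := hasDerivAt_besselSeries (-μ) x
    have h2 := hasDerivAt_besselSeries (μ - 1) x
    have h3 := hasDerivAt_besselSeries (1 - μ) x
    have h4 := hasDerivAt_besselSeries μ x
    refine ((h1.mul h2).sub ((hasDerivAt_id x).ofReal_comp.mul (h3.mul h4))).congr_deriv ?_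
    have r1 := besselSeries_sub_one μ x
    have r2 := besselSeries_sub_one (1 - μ) x
    rw [show 1 - μ - 1 = -μ by ring] at r2
    rw [show -μ + 1 = 1 - μ by ring, show μ - 1 + 1 = μ by ring]
    simp only [id, Complex.ofReal_one, one_mul, Pi.mul_apply]
    linear_combination besselSeries (1 - μ) x * r1 + besselSeries μ x * r2
  have hc := is_const_of_deriv_eq_zero (fun x => (hd x).differentiableAt) (fun x => (hd x).deriv) b 0
  change f b = _
  rw [hc]
  simp only [f, besselSeries_zero, Complex.ofReal_zero, zero_mul, sub_zero, sub_add_cancel]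
  rw [← mul_inv, mul_comm (Complex.Gamma _), neg_add_eq_sub, Complex.Gamma_mul_Gamma_one_sub,
    inv_div]

/-- The integral `∫₀^∞ u ^ (μ - 1) exp(-u - b / u) du`. -/
noncomputable def besselIntegral (μ : ℂ) (b : ℝ) : ℂ :=
  ∫ u in Ioi (0 : ℝ), (u : ℂ) ^ (μ - 1) * (Real.exp (-u - b / u) : ℂ)

lemma exp_neg_div_le {b u : ℝ} (hb : 0 < b) (hu : 0 < u) (n : ℕ) :
    Real.exp (-(b / u)) ≤ n.factorial / b ^ n * u ^ n := by
  have h := Real.pow_div_factorial_le_exp (b / u) (div_pos hb hu).le n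
  rw [Real.exp_neg]
  calc (Real.exp (b / u))⁻¹ ≤ ((b / u) ^ n / n.factorial)⁻¹ := by gcongr
    _ = n.factorial / b ^ n * u ^ n := by
      rw [div_pow]
      field_simp

lemma rpow_mul_exp_le {b u : ℝ} (hb : 0 < b) (hu : 0 < u) (c : ℝ) (n : ℕ) :
    u ^ c * Real.exp (-u - b / u) ≤ n.factorial / b ^ n * (Real.exp (-u) * u ^ (c + n)) := by
  rw [sub_eq_add_neg, Real.exp_add, Real.rpow_add hu, Real.rpow_natCast]
  calc u ^ c * (Real.exp (-u) * Real.exp (-(b / u)))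
      ≤ u ^ c * (Real.exp (-u) * (n.factorial / b ^ n * u ^ n)) := by
        gcongr
        exact exp_neg_div_le hb hu n
    _ = _ := by ring

lemma continuousOn_rpow_mul_exp (c b : ℝ) :
    ContinuousOn (fun u : ℝ => u ^ c * Real.exp (-u - b / u)) (Ioi 0) := by
  intro u hu
  have hu' : u ≠ 0 := (mem_Ioi.1 hu).ne'
  refine ContinuousAt.continuousWithinAt ?_
  exact (Real.continuousAt_rpow_const u c (Or.inl hu')).mul
    (Real.continuous_exp.continuousAt.comp
      (continuousAt_id.neg.sub (continuousAt_const.div continuousAt_id hu')))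

lemma continuousOn_cpow_mul_exp (μ : ℂ) (b : ℝ) :
    ContinuousOn (fun u : ℝ => (u : ℂ) ^ μ * (Real.exp (-u - b / u) : ℂ)) (Ioi 0) := by
  intro u hu
  have hu' : u ≠ 0 := (mem_Ioi.1 hu).ne'
  refine ContinuousAt.continuousWithinAt ?_
  exact (Complex.continuousAt_ofReal_cpow_const u μ (Or.inr hu')).mul
    (Complex.continuous_ofReal.continuousAt.comp (Real.continuous_exp.continuousAt.comp
      (continuousAt_id.neg.sub (continuousAt_const.div continuousAt_id hu'))))

lemma integrableOn_rpow_mul_exp {b : ℝ} (hb : 0 < b) (c : ℝ) :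
    IntegrableOn (fun u : ℝ => u ^ c * Real.exp (-u - b / u)) (Ioi 0) := by
  obtain ⟨n, hn⟩ := exists_nat_gt (-c - 1)
  have hG := (Real.GammaIntegral_convergent (s := c + n + 1) (by linarith)).const_mul
    (n.factorial / b ^ n : ℝ)
  refine hG.mono' ((continuousOn_rpow_mul_exp c b).aestronglyMeasurable measurableSet_Ioi) ?_
  refine (ae_restrict_mem measurableSet_Ioi).mono fun u hu => ?_
  have hu : 0 < u := hu
  rw [Real.norm_of_nonneg (by positivity), add_sub_cancel_right]
  exact rpow_mul_exp_le hb hu c n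

lemma norm_cpow_mul_exp (μ : ℂ) (b : ℝ) {u : ℝ} (hu : 0 < u) :
    ‖(u : ℂ) ^ μ * (Real.exp (-u - b / u) : ℂ)‖ = u ^ μ.re * Real.exp (-u - b / u) := by
  rw [norm_mul, Complex.norm_cpow_eq_rpow_re_of_pos hu, Complex.norm_real,
    Real.norm_of_nonneg (Real.exp_pos _).le]

lemma integrableOn_cpow_mul_exp {b : ℝ} (hb : 0 < b) (μ : ℂ) :
    IntegrableOn (fun u : ℝ => (u : ℂ) ^ μ * (Real.exp (-u - b / u) : ℂ)) (Ioi 0) := by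
  refine (integrableOn_rpow_mul_exp hb μ.re).mono'
    ((continuousOn_cpow_mul_exp μ b).aestronglyMeasurable measurableSet_Ioi) ?_
  exact (ae_restrict_mem measurableSet_Ioi).mono fun u hu => (norm_cpow_mul_exp μ b hu).le

lemma cpow_sub_one_eq_div {u : ℝ} (hu : 0 < u) (μ : ℂ) : (u : ℂ) ^ (μ - 1) = (u : ℂ) ^ μ / u := by
  rw [Complex.cpow_sub _ _ (by exact_mod_cast hu.ne'), Complex.cpow_one]

lemma hasDerivAt_besselIntegral (μ : ℂ) {b : ℝ} (hb : 0 < b) :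
    HasDerivAt (besselIntegral μ) (-besselIntegral (μ - 1) b) b := by
  have h := (hasDerivAt_integral_of_dominated_loc_of_deriv_le (𝕜 := ℝ)
    (μ := volume.restrict (Ioi (0 : ℝ))) (x₀ := b) (s := Ioi (b / 2))
    (F := fun b u => (u : ℂ) ^ (μ - 1) * (Real.exp (-u - b / u) : ℂ))
    (F' := fun b u => -((u : ℂ) ^ (μ - 1 - 1) * (Real.exp (-u - b / u) : ℂ)))
    (bound := fun u => u ^ (μ - 1 - 1).re * Real.exp (-u - (b / 2) / u))
    (Ioi_mem_nhds (by linarith))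
    (Eventually.of_forall fun x =>
      (continuousOn_cpow_mul_exp _ x).aestronglyMeasurable measurableSet_Ioi)
    (integrableOn_cpow_mul_exp hb _)
    ((continuousOn_cpow_mul_exp _ b).aestronglyMeasurable measurableSet_Ioi).neg
    ((ae_restrict_mem measurableSet_Ioi).mono fun u hu x hx => ?_)
    (integrableOn_rpow_mul_exp (half_pos hb) _)
    ((ae_restrict_mem measurableSet_Ioi).mono fun u hu x hx => ?_)).2
  · exact h.congr_deriv (integral_neg _)
  · have hu : 0 < u := hu
    have hx : b / 2 ≤ x := (mem_Ioi.1 hx).le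
    rw [norm_neg, norm_cpow_mul_exp _ _ hu]
    gcongr
  · have hu : 0 < u := hu
    have h1 : HasDerivAt (fun x : ℝ => Real.exp (-u - x / u))
        (Real.exp (-u - x / u) * -(1 / u)) x := by
      have := (((hasDerivAt_id x).div_const u).const_sub (-u)).exp
      simpa using this
    refine (h1.ofReal_comp.const_mul _).congr_deriv ?_
    rw [cpow_sub_one_eq_div hu (μ - 1)]
    push_cast
    ring

lemma besselIntegral_add_one (μ : ℂ) {b : ℝ} (hb : 0 < b) :
    besselIntegral (μ + 1) b = μ * besselIntegral μ b + b * besselIntegral (μ - 1) b := by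
  set f : ℝ → ℂ := fun u => (u : ℂ) ^ μ * (Real.exp (-u - b / u) : ℂ) with hf
  set f' : ℝ → ℂ := fun u => μ * ((u : ℂ) ^ (μ - 1) * (Real.exp (-u - b / u) : ℂ)) +
    b * ((u : ℂ) ^ (μ - 1 - 1) * (Real.exp (-u - b / u) : ℂ)) -
    (u : ℂ) ^ μ * (Real.exp (-u - b / u) : ℂ) with hf'
  have hd : ∀ u ∈ Ioi (0 : ℝ), HasDerivAt f (f' u) u := by
    intro u hu
    have hu : 0 < u := hu
    have hu0 : (u : ℂ) ≠ 0 := by exact_mod_cast hu.ne'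
    have h1 : HasDerivAt (fun u : ℝ => Real.exp (-u - b / u))
        (Real.exp (-u - b / u) * (-1 + b / u ^ 2)) u := by
      have := ((hasDerivAt_neg u).sub ((hasDerivAt_inv hu.ne').const_mul b)).exp
      refine this.congr_deriv ?_
      simp only [Pi.sub_apply]
      ring_nf
    have h2 : HasDerivAt (fun u : ℝ => (u : ℂ) ^ μ) (μ * (u : ℂ) ^ (μ - 1)) u := by
      have := (hasDerivAt_id (u : ℂ)).cpow_const (c := μ) (Or.inl (by simpa using hu))
      simpa using this.comp_ofReal
    refine (h2.mul h1.ofReal_comp).congr_deriv ?_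
    simp only [hf', cpow_sub_one_eq_div hu]
    push_cast
    field_simp
    ring
  have i1 := (integrableOn_cpow_mul_exp hb (μ - 1)).const_mul μ
  have i2 := (integrableOn_cpow_mul_exp hb (μ - 1 - 1)).const_mul (b : ℂ)
  have i3 := integrableOn_cpow_mul_exp hb μ
  have hi : IntegrableOn f' (Ioi 0) := (i1.add i2).sub i3
  have htop : Tendsto f atTop (𝓝 0) :=
    tendsto_zero_of_hasDerivAt_of_integrableOn_Ioi hd hi i3
  have hzero : Tendsto f (𝓝[>] 0) (𝓝 0) := by
    obtain ⟨n, hn⟩ := exists_nat_gt (-μ.re)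
    have hlim : Tendsto (fun u : ℝ => n.factorial / b ^ n * (Real.exp (-u) * u ^ (μ.re + n)))
        (𝓝[>] 0) (𝓝 0) := by
      have hc : ContinuousAt
          (fun u : ℝ => n.factorial / b ^ n * (Real.exp (-u) * u ^ (μ.re + n))) 0 :=
        continuousAt_const.mul ((Real.continuous_exp.comp continuous_neg).continuousAt.mul
          (Real.continuousAt_rpow_const 0 _ (Or.inr (by linarith))))
      have := hc.tendsto
      rw [Real.zero_rpow (by linarith), mul_zero, mul_zero] at this
      exact this.mono_left nhdsWithin_le_nhds
    refine squeeze_zero_norm' ?_ hlim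
    filter_upwards [self_mem_nhdsWithin] with u hu
    rw [hf, norm_cpow_mul_exp _ _ hu]
    exact rpow_mul_exp_le hb hu _ n
  have hint : ∫ u in Ioi (0 : ℝ), f' u = 0 := by
    have hcont : ContinuousWithinAt (Function.update f 0 0) (Ici 0) 0 := by
      rw [continuousWithinAt_update_same]
      simpa using hzero
    have hd' : ∀ u ∈ Ioi (0 : ℝ), HasDerivAt (Function.update f 0 0) (f' u) u := fun u hu =>
      (hd u hu).congr_of_eventuallyEq <| by
        filter_upwards [Ioi_mem_nhds hu] with y hy
        exact Function.update_of_ne (mem_Ioi.1 hy).ne' _ _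
    have htop' : Tendsto (Function.update f 0 0) atTop (𝓝 0) := by
      refine htop.congr' ?_
      filter_upwards [Ioi_mem_atTop (0 : ℝ)] with y hy
      exact (Function.update_of_ne (mem_Ioi.1 hy).ne' _ _).symm
    rw [integral_Ioi_of_hasDerivAt_of_tendsto hcont hd' hi htop', Function.update_self, sub_zero]
  have hsplit : ∫ u in Ioi (0 : ℝ), f' u = μ * besselIntegral μ b +
      b * besselIntegral (μ - 1) b - besselIntegral (μ + 1) b := by
    simp only [besselIntegral, ← integral_const_mul, add_sub_cancel_right]
    rw [← integral_add i1 i2]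
    exact integral_sub (i1.add i2) i3
  rw [hint] at hsplit
  linear_combination hsplit

lemma besselIntegral_eq_cpow_mul_neg (μ : ℂ) {b : ℝ} (hb : 0 < b) :
    besselIntegral μ b = (b : ℂ) ^ μ * besselIntegral (-μ) b := by
  set g : ℝ → ℂ := fun u => (Real.exp (-u - b / u) : ℂ) with hg
  have hm : ∀ ν, besselIntegral ν b = mellin g ν := fun ν => by
    simp [besselIntegral, mellin, hg]
  have h1 := mellin_comp_inv (fun t => g (b * t)) μ
  rw [mellin_comp_mul_left g (-μ) hb, neg_neg, smul_eq_mul] at h1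
  rw [hm, hm, ← h1]
  refine setIntegral_congr_fun measurableSet_Ioi fun u hu => ?_
  have hu : u ≠ 0 := (mem_Ioi.1 hu).ne'
  have : -u - b / u = -(b * u⁻¹) - b / (b * u⁻¹) := by
    field_simp
    ring
  simp only [hg, this]

lemma tendsto_besselIntegral {μ : ℂ} (hμ : 0 < μ.re) :
    Tendsto (besselIntegral μ) (𝓝[>] 0) (𝓝 (Complex.Gamma μ)) := by
  rw [Complex.Gamma_eq_integral hμ, Complex.GammaIntegral]
  refine tendsto_integral_filter_of_dominated_convergence
    (fun u => Real.exp (-u) * u ^ (μ.re - 1))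
    (Eventually.of_forall fun x =>
      (continuousOn_cpow_mul_exp _ x).aestronglyMeasurable measurableSet_Ioi) ?_
    (Real.GammaIntegral_convergent hμ) ?_
  · filter_upwards [self_mem_nhdsWithin] with x hx
    refine (ae_restrict_mem measurableSet_Ioi).mono fun u hu => ?_
    have hu : 0 < u := hu
    have hx : 0 < x := hx
    rw [norm_cpow_mul_exp _ _ hu, mul_comm, Complex.sub_re, Complex.one_re]
    gcongr
    linarith [div_pos hx hu]
  · refine (ae_restrict_mem measurableSet_Ioi).mono fun u hu => ?_
    have hc : Continuous fun x : ℝ => (u : ℂ) ^ (μ - 1) * (Real.exp (-u - x / u) : ℂ) := by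
      fun_prop
    have := hc.tendsto 0
    rw [zero_div, sub_zero, mul_comm] at this
    exact this.mono_left nhdsWithin_le_nhds

lemma besselIntegral_wronskian_of_one_lt_re {μ : ℂ} (hμ : 1 < μ.re) {b : ℝ} (hb : 0 < b) :
    besselIntegral μ b * besselSeries (μ - 1) b +
      b * (besselIntegral (μ - 1) b * besselSeries μ b) = 1 := by
  set f : ℝ → ℂ := fun b => besselIntegral μ b * besselSeries (μ - 1) b +
    b * (besselIntegral (μ - 1) b * besselSeries μ b) with hf
  have hd : ∀ x ∈ Ioi (0 : ℝ), HasDerivAt f 0 x := by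
    intro x hx
    have h1 := hasDerivAt_besselIntegral μ hx
    have h2 := hasDerivAt_besselSeries (μ - 1) x
    have h3 := hasDerivAt_besselIntegral (μ - 1) hx
    have h4 := hasDerivAt_besselSeries μ x
    refine ((h1.mul h2).add ((hasDerivAt_id x).ofReal_comp.mul (h3.mul h4))).congr_deriv ?_
    have r1 := besselSeries_sub_one μ x
    have r2 := besselIntegral_add_one (μ - 1) hx
    rw [sub_add_cancel] at r2
    rw [sub_add_cancel]
    simp only [id, Complex.ofReal_one, one_mul, Pi.mul_apply]
    linear_combination (-besselIntegral (μ - 1) x) * r1 + besselSeries μ x * r2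
  have hconst : ∀ x ∈ Ioi (0 : ℝ), f x = f b := fun x hx =>
    isOpen_Ioi.is_const_of_deriv_eq_zero isPreconnected_Ioi
      (fun y hy => (hd y hy).differentiableAt.differentiableWithinAt)
      (fun y hy => (hd y hy).deriv) hx hb
  have hP : ∀ ν, Tendsto (besselSeries ν) (𝓝[>] 0) (𝓝 (Complex.Gamma (ν + 1))⁻¹) := fun ν => by
    rw [← besselSeries_zero]
    exact (hasDerivAt_besselSeries ν 0).continuousAt.tendsto.mono_left nhdsWithin_le_nhds
  have hb0 : Tendsto (fun x : ℝ => (x : ℂ)) (𝓝[>] 0) (𝓝 0) := by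
    have := Complex.continuous_ofReal.tendsto 0
    rw [Complex.ofReal_zero] at this
    exact this.mono_left nhdsWithin_le_nhds
  have hlim : Tendsto f (𝓝[>] 0) (𝓝 1) := by
    have hμ' : 0 < (μ - 1).re := by simpa using hμ
    have h := ((tendsto_besselIntegral (μ := μ) (by linarith)).mul (hP (μ - 1))).add
      (hb0.mul ((tendsto_besselIntegral hμ').mul (hP μ)))
    rwa [sub_add_cancel μ 1, zero_mul, add_zero,
      mul_inv_cancel₀ (Complex.Gamma_ne_zero_of_re_pos (by linarith))] at h
  refine tendsto_nhds_unique (tendsto_const_nhds.congr' ?_) hlim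
  filter_upwards [self_mem_nhdsWithin] with x hx using (hconst x hx).symm

lemma besselIntegral_wronskian (μ : ℂ) {b : ℝ} (hb : 0 < b) :
    besselIntegral μ b * besselSeries (μ - 1) b +
      b * (besselIntegral (μ - 1) b * besselSeries μ b) = 1 := by
  have hn : ∀ (n : ℕ) (μ : ℂ), 1 < μ.re + n →
      besselIntegral μ b * besselSeries (μ - 1) b +
        b * (besselIntegral (μ - 1) b * besselSeries μ b) = 1 := by
    intro n
    induction n with
    | zero => exact fun μ hμ => besselIntegral_wronskian_of_one_lt_re (by simpa using hμ) hb
    | succ n ih =>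
      intro μ hμ
      have h := ih (μ + 1) (by
        rw [Complex.add_re, Complex.one_re]
        push_cast at hμ
        linarith)
      rw [add_sub_cancel_right] at h
      linear_combination h - besselSeries μ b * besselIntegral_add_one μ hb +
        besselIntegral μ b * besselSeries_sub_one μ b
  obtain ⟨n, h⟩ := exists_nat_gt (1 - μ.re)
  exact hn n μ (by linarith)

lemma besselIntegral_eq_besselSeries {μ : ℂ} (hμ : ∀ q : ℤ, μ ≠ q) {b : ℝ} (hb : 0 < b) :
    besselIntegral μ b = Real.pi / Complex.sin (Real.pi * μ) *
      (besselSeries (-μ) b - (b : ℂ) ^ μ * besselSeries μ b) := by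
  have hπ : (Real.pi : ℂ) ≠ 0 := by exact_mod_cast Real.pi_ne_zero
  have hsin : Complex.sin (Real.pi * μ) ≠ 0 := by
    rw [Complex.sin_ne_zero_iff]
    intro q h
    exact hμ q (mul_left_cancel₀ hπ (by rw [h]; ring))
  have w1 := besselIntegral_wronskian μ hb
  have w2 := besselIntegral_wronskian (1 - μ) hb
  have s1 := besselIntegral_eq_cpow_mul_neg μ hb
  have s2 := besselIntegral_eq_cpow_mul_neg (μ - 1) hb
  have hb0 : (b : ℂ) ≠ 0 := by exact_mod_cast hb.ne'
  have hbμ : (b : ℂ) ^ μ = b * (b : ℂ) ^ (μ - 1) := by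
    rw [Complex.cpow_sub _ _ hb0, Complex.cpow_one, mul_div_cancel₀ _ hb0]
  have cr := besselSeries_cross μ b
  rw [show 1 - μ - 1 = -μ by ring] at w2
  rw [show -(μ - 1) = 1 - μ by ring] at s2
  have key : besselIntegral μ b * (Complex.sin (Real.pi * μ) / Real.pi) =
      besselSeries (-μ) b - (b : ℂ) ^ μ * besselSeries μ b := by
    rw [← cr]
    linear_combination besselSeries (-μ) b * w1 - (b : ℂ) ^ μ * besselSeries μ b * w2 -
      b * besselSeries (1 - μ) b * besselSeries μ b * s1 -
      b * besselSeries (-μ) b * besselSeries μ b * s2 +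
      besselSeries μ b * besselSeries (-μ) b * besselIntegral (1 - μ) b * hbμ
  rw [← key]
  field_simp

lemma integral_cpow_mul_exp_sub_div {a c : ℝ} (ha : 0 < a) (μ : ℂ) :
    ∫ u in Ioi (0 : ℝ), (u : ℂ) ^ (μ - 1) * (Real.exp (-(a * u) - c / u) : ℂ) =
      (a : ℂ) ^ (-μ) * besselIntegral μ (a * c) := by
  set g : ℝ → ℂ := fun u => (Real.exp (-u - a * c / u) : ℂ) with hg
  have h1 := mellin_comp_mul_left g μ ha
  have h2 : mellin g μ = besselIntegral μ (a * c) := by simp [besselIntegral, mellin, hg]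
  rw [← h2, ← smul_eq_mul, ← h1]
  refine setIntegral_congr_fun measurableSet_Ioi fun u _ => ?_
  simp only [hg, smul_eq_mul, mul_div_mul_left _ _ ha.ne']

section Fourier

variable {V : Type*} [NormedAddCommGroup V] [InnerProductSpace ℝ V] [FiniteDimensional ℝ V]
  [MeasurableSpace V] [BorelSpace V]

lemma integrable_cpow_mul_exp_mul_exp_inner {s : ℂ} (hs : (Module.finrank ℝ V : ℝ) / 2 < s.re)
    {r : ℝ} (hr : 0 < r) (ξ : V) :
    Integrable (fun p : V × ℝ => (p.2 : ℂ) ^ (s - 1) * Complex.exp (-((‖p.1‖ ^ 2 + r : ℝ) * p.2)) *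
      Complex.exp (-Complex.I * (⟪p.1, ξ⟫_ℝ : ℂ)))
      ((volume : Measure V).prod (volume.restrict (Ioi (0 : ℝ)))) := by
  have hnorm : ∀ (x : V) (u : ℝ), 0 < u →
      ‖(u : ℂ) ^ (s - 1) * Complex.exp (-((‖x‖ ^ 2 + r : ℝ) * u)) *
        Complex.exp (-Complex.I * (⟪x, ξ⟫_ℝ : ℂ))‖ =
      u ^ (s.re - 1) * Real.exp (-(r * u)) * Real.exp (-u * ‖x‖ ^ 2) := by
    intro x u hu
    rw [norm_mul, norm_mul, Complex.norm_cpow_eq_rpow_re_of_pos hu, Complex.norm_exp,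
      Complex.norm_exp, mul_assoc _ (Real.exp _), mul_assoc, ← Real.exp_add, ← Real.exp_add]
    rw [← Complex.ofReal_mul, ← Complex.ofReal_neg, Complex.ofReal_re, neg_mul, Complex.neg_re,
      Complex.re_mul_ofReal, Complex.I_re, Complex.sub_re,
      Complex.one_re]
    ring_nf
  have hgauss : ∀ u : ℝ, 0 < u → Integrable fun x : V => Real.exp (-u * ‖x‖ ^ 2) := by
    intro u hu
    have := (GaussianFourier.integrable_cexp_neg_mul_sq_norm_add (V := V) (b := (u : ℂ))
      (by simpa using hu) 0 0).norm
    refine this.congr (Eventually.of_forall fun x => ?_)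
    simp only [Complex.norm_exp, zero_mul, add_zero]
    rw [← Complex.ofReal_neg, ← Complex.ofReal_pow, ← Complex.ofReal_mul, Complex.ofReal_re]
  have hmeas : Measurable fun p : V × ℝ => (p.2 : ℂ) ^ (s - 1) *
      Complex.exp (-((‖p.1‖ ^ 2 + r : ℝ) * p.2)) *
      Complex.exp (-Complex.I * (⟪p.1, ξ⟫_ℝ : ℂ)) := by
    fun_prop
  rw [integrable_prod_iff' hmeas.aestronglyMeasurable]
  constructor
  · refine (ae_restrict_mem measurableSet_Ioi).mono fun u hu => ?_
    have hm : Measurable fun x : V => (u : ℂ) ^ (s - 1) *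
        Complex.exp (-((‖x‖ ^ 2 + r : ℝ) * u)) *
        Complex.exp (-Complex.I * (⟪x, ξ⟫_ℝ : ℂ)) := by
      fun_prop
    refine ((hgauss u hu).const_mul (u ^ (s.re - 1) * Real.exp (-(r * u)))).mono'
      hm.aestronglyMeasurable (Eventually.of_forall fun x => ?_)
    exact (hnorm x u hu).le
  · have h := (integrableOn_rpow_mul_exp_neg_mul_rpow (p := 1)
      (s := s.re - 1 - Module.finrank ℝ V / 2) (b := r)
      (by linarith) one_pos hr).const_mul (Real.pi ^ (Module.finrank ℝ V / 2 : ℝ))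
    refine h.congr ((ae_restrict_mem measurableSet_Ioi).mono fun u hu => ?_)
    have hu : 0 < u := hu
    simp only [hnorm _ u hu]
    rw [integral_const_mul, GaussianFourier.integral_rexp_neg_mul_sq_norm hu,
      Real.div_rpow Real.pi_pos.le hu.le, Real.rpow_sub hu, Real.rpow_one]
    ring_nf

lemma Gamma_mul_integral_cpow_mul_exp_inner {s : ℂ} (hs : (Module.finrank ℝ V : ℝ) / 2 < s.re)
    {r : ℝ} (hr : 0 < r) (ξ : V) :
    Complex.Gamma s * ∫ x : V, ((‖x‖ ^ 2 + r : ℝ) : ℂ) ^ (-s) *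
        Complex.exp (-Complex.I * (⟪x, ξ⟫_ℝ : ℂ)) =
      (Real.pi : ℂ) ^ ((Module.finrank ℝ V : ℂ) / 2) *
        ((r : ℂ) ^ ((Module.finrank ℝ V : ℂ) / 2 - s) *
          besselIntegral (s - (Module.finrank ℝ V : ℂ) / 2) (r * (‖ξ‖ ^ 2 / 4))) := by
  have hs0 : 0 < s.re := lt_of_le_of_lt (by positivity) hs
  have hleft : ∀ x : V, ∫ u in Ioi (0 : ℝ), (u : ℂ) ^ (s - 1) *
      Complex.exp (-((‖x‖ ^ 2 + r : ℝ) * u)) * Complex.exp (-Complex.I * (⟪x, ξ⟫_ℝ : ℂ)) =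
      Complex.Gamma s * (((‖x‖ ^ 2 + r : ℝ) : ℂ) ^ (-s) *
        Complex.exp (-Complex.I * (⟪x, ξ⟫_ℝ : ℂ))) := by
    intro x
    have hpos : 0 < ‖x‖ ^ 2 + r := by positivity
    rw [integral_mul_const, Complex.integral_cpow_mul_exp_neg_mul_Ioi hs0 hpos, one_div,
      Complex.inv_cpow _ _ (by
        rw [Complex.arg_ofReal_of_nonneg hpos.le]
        exact Real.pi_ne_zero.symm), Complex.cpow_neg]
    ring
  have hright : ∀ u ∈ Ioi (0 : ℝ), ∫ x : V, (u : ℂ) ^ (s - 1) *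
      Complex.exp (-((‖x‖ ^ 2 + r : ℝ) * u)) * Complex.exp (-Complex.I * (⟪x, ξ⟫_ℝ : ℂ)) =
      (Real.pi : ℂ) ^ ((Module.finrank ℝ V : ℂ) / 2) *
        ((u : ℂ) ^ (s - (Module.finrank ℝ V : ℂ) / 2 - 1) *
          (Real.exp (-(r * u) - ‖ξ‖ ^ 2 / 4 / u) : ℂ)) := by
    intro u hu
    have hu : 0 < u := hu
    have hu0 : (u : ℂ) ≠ 0 := by exact_mod_cast hu.ne'
    have hker : ∀ x : V, (u : ℂ) ^ (s - 1) *
        Complex.exp (-((‖x‖ ^ 2 + r : ℝ) * u)) * Complex.exp (-Complex.I * (⟪x, ξ⟫_ℝ : ℂ)) =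
        (u : ℂ) ^ (s - 1) * Complex.exp (-(r * u)) *
          Complex.exp (-(u : ℂ) * ‖x‖ ^ 2 + -Complex.I * ⟪ξ, x⟫_ℝ) := by
      intro x
      rw [mul_assoc, mul_assoc, ← Complex.exp_add, ← Complex.exp_add, real_inner_comm]
      push_cast
      ring_nf
    simp only [hker]
    rw [integral_const_mul,
      GaussianFourier.integral_cexp_neg_mul_sq_norm_add (by simpa using hu), neg_sq, Complex.I_sq,
      ← Complex.ofReal_div, Complex.ofReal_div, Complex.div_cpow_ofReal_nonneg Real.pi_pos.le hu.le,
      show s - (Module.finrank ℝ V : ℂ) / 2 - 1 = s - 1 - (Module.finrank ℝ V : ℂ) / 2 by ring,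
      Complex.cpow_sub (s - 1) _ hu0, sub_eq_add_neg (-(r * u)), Real.exp_add]
    push_cast
    rw [show (-1 : ℂ) * (‖ξ‖ : ℂ) ^ 2 / (4 * u) = -((‖ξ‖ : ℂ) ^ 2 / 4 / u) by field_simp]
    ring
  calc _ = ∫ x : V, ∫ u in Ioi (0 : ℝ), (u : ℂ) ^ (s - 1) *
        Complex.exp (-((‖x‖ ^ 2 + r : ℝ) * u)) * Complex.exp (-Complex.I * (⟪x, ξ⟫_ℝ : ℂ)) := by
        rw [← integral_const_mul]
        exact (integral_congr_ae (Eventually.of_forall hleft)).symm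
    _ = ∫ u in Ioi (0 : ℝ), ∫ x : V, (u : ℂ) ^ (s - 1) *
        Complex.exp (-((‖x‖ ^ 2 + r : ℝ) * u)) * Complex.exp (-Complex.I * (⟪x, ξ⟫_ℝ : ℂ)) :=
        integral_integral_swap (integrable_cpow_mul_exp_mul_exp_inner hs hr ξ)
    _ = _ := by
        rw [setIntegral_congr_fun measurableSet_Ioi hright, integral_const_mul,
          integral_cpow_mul_exp_sub_div hr, neg_sub]

end Fourier

lemma besselI_eq_besselSeries (ν : ℂ) (z : ℝ) :
    besselI ν z = ((z : ℂ) / 2) ^ ν * besselSeries ν ((z / 2) ^ 2) := by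
  simp [besselI, besselSeries, pow_mul]

lemma two_mul_besselKt {ν : ℂ} (hν : ∀ q : ℤ, ν ≠ q) {z : ℝ} (hz : 0 < z) :
    2 * besselKt ν z = besselIntegral (-ν) ((z / 2) ^ 2) := by
  have hν' : ∀ q : ℤ, -ν ≠ q := fun q h => hν (-q) (by rw [← neg_neg ν, h]; push_cast; rfl)
  have hz2 : 0 < z / 2 := by positivity
  have hw : ((z : ℂ) / 2) ≠ 0 := by exact_mod_cast hz2.ne'
  have hcancel : ((z : ℂ) / 2) ^ (-ν) * ((z : ℂ) / 2) ^ ν = 1 := by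
    rw [← Complex.cpow_add _ _ hw, neg_add_cancel, Complex.cpow_zero]
  have hsq : (((z / 2) ^ 2 : ℝ) : ℂ) ^ (-ν) =
      ((z : ℂ) / 2) ^ (-ν) * ((z : ℂ) / 2) ^ (-ν) := by
    rw [sq, Complex.ofReal_mul, Complex.mul_cpow_ofReal_nonneg hz2.le hz2.le]
    push_cast
    rfl
  rw [besselIntegral_eq_besselSeries hν' (by positivity), hsq, besselKt, besselK,
    besselI_eq_besselSeries, besselI_eq_besselSeries, neg_neg, mul_neg, Complex.sin_neg,
    mul_comm ν]
  set S := Complex.sin (Real.pi * ν)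
  rw [div_neg, show (Real.pi : ℂ) / (2 * S) = Real.pi / S / 2 by
    rw [div_div, mul_comm S]]
  linear_combination -(Real.pi / S * besselSeries ν ((z / 2) ^ 2)) * hcancel

lemma besselK_neg (ν : ℂ) (z : ℝ) : besselK (-ν) z = besselK ν z := by
  rw [besselK, besselK, neg_neg, neg_mul, Complex.sin_neg, mul_neg, div_neg]
  ring

lemma besselKt_duality (ν : ℂ) {z : ℝ} (hz : 0 < z) :
    besselKt ν z = ((z : ℂ) / 2) ^ (-2 * ν) * besselKt (-ν) z := by
  have hw : ((z : ℂ) / 2) ≠ 0 := by exact_mod_cast (half_pos hz).ne'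
  rw [besselKt, besselKt, besselK_neg, ← mul_assoc, ← Complex.cpow_add _ _ hw]
  ring_nf

end

theorem stmt_19 (m : ℕ) (hm : 1 ≤ m) (lam : ℂ) (hlam : lam.re < -(m : ℝ) / 2)
    (t : ℝ) (ht : t ≠ 0) (ξ : EuclideanSpace ℝ (Fin m)) (hξ : ξ ≠ 0)
    (hord : ∀ q : ℤ, (m : ℂ) / 2 + lam ≠ q) :
    (∫ x : EuclideanSpace ℝ (Fin m),
        ((‖x‖ ^ 2 + t ^ 2 : ℝ) : ℂ) ^ lam * Complex.exp (-Complex.I * (⟪x, ξ⟫_ℝ : ℂ))) =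
        2 * ((|t| : ℝ) : ℂ) ^ ((m : ℂ) + 2 * lam) * (Real.pi : ℂ) ^ ((m : ℂ) / 2) /
          Complex.Gamma (-lam) * besselKt ((m : ℂ) / 2 + lam) (|t| * ‖ξ‖) ∧
      ∀ (ν : ℂ) (z : ℝ), 0 < z →
        besselKt ν z = ((z : ℂ) / 2) ^ (-2 * ν) * besselKt (-ν) z := by
  refine ⟨?_, fun ν z hz => besselKt_duality ν hz⟩
  have hs : (Module.finrank ℝ (EuclideanSpace ℝ (Fin m)) : ℝ) / 2 < (-lam).re := by
    rw [finrank_euclideanSpace_fin, Complex.neg_re]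
    linarith
  have hΓ : Complex.Gamma (-lam) ≠ 0 :=
    Complex.Gamma_ne_zero_of_re_pos (lt_of_le_of_lt (by positivity) hs)
  have ht' : 0 < |t| := abs_pos.2 ht
  have hξ' : 0 < ‖ξ‖ := norm_pos_iff.2 hξ
  have key := Gamma_mul_integral_cpow_mul_exp_inner hs (r := t ^ 2) (by positivity) ξ
  have hK := two_mul_besselKt hord (mul_pos ht' hξ')
  rw [finrank_euclideanSpace_fin, neg_neg, sub_neg_eq_add,
    show -lam - (m : ℂ) / 2 = -((m : ℂ) / 2 + lam) by ring,
    show t ^ 2 * (‖ξ‖ ^ 2 / 4) = (|t| * ‖ξ‖ / 2) ^ 2 by rw [← sq_abs t]; ring, ← hK] at key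
  have hpow : ((t ^ 2 : ℝ) : ℂ) ^ ((m : ℂ) / 2 + lam) = ((|t| : ℝ) : ℂ) ^ ((m : ℂ) + 2 * lam) := by
    rw [← sq_abs, sq, Complex.ofReal_mul, Complex.mul_cpow_ofReal_nonneg ht'.le ht'.le,
      ← Complex.cpow_add _ _ (by exact_mod_cast ht'.ne')]
    ring_nf
  rw [hpow] at key
  rw [div_mul_eq_mul_div, eq_div_iff hΓ]
  linear_combination key
end
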